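/- Let q ≥ 1 and let D be a symmetric n×n real matrix with n ≥ 2q+2. The identity permutation is a master tour for the q-stripe TSP on D if and only if D is a q-Kalmanson matrix. -/

import Mathlib

/-- Cyclic shift: the city `p` steps after position `i` in the circular order on `Fin n`. -/
def finShift {n : ℕ} (i : Fin n) (p : ℕ) : Fin n :=
  ⟨(i.val + p) % n, Nat.mod_lt _ i.pos⟩

/-- The `q`-stripe TSP objective: `∑_{p=1}^{q} ∑_{i=1}^{n} d(π(i), π(i+p))`,
indices taken cyclically modulo `n`. -/
noncomputable def stripeObj (q : ℕ) {n : ℕ} (D : Fin n → Fin n → ℝ)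
    (π : Equiv.Perm (Fin n)) : ℝ :=
  ∑ p ∈ Finset.Icc 1 q, ∑ i : Fin n, D (π i) (π (finShift i p))

/-- The fully crossing involution on `2q+2` points: `j ↦ j + (q+1) (mod 2q+2)`. -/
def crossShift (q : ℕ) (j : Fin (2*q+2)) : Fin (2*q+2) :=
  ⟨(j.val + (q+1)) % (2*q+2), Nat.mod_lt _ (by omega)⟩

/-- A symmetric matrix `D` is `q`-Kalmanson if for every choice of `2q+2` indices
(in increasing order, via a strictly monotone `f`), the fully crossing matching has
maximum weight among all perfect matchings of these `2q+2` indices.  Perfect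
matchings are encoded as fixed-point-free involutions `σ`; each matching weight is
counted twice in the sums below (once from each endpoint), which for symmetric `D`
is equivalent to comparing matching weights. -/
def qKalmanson (q : ℕ) {n : ℕ} (D : Fin n → Fin n → ℝ) : Prop :=
  ∀ f : Fin (2*q+2) → Fin n, StrictMono f →
    ∀ σ : Equiv.Perm (Fin (2*q+2)), (∀ j, σ (σ j) = j) → (∀ j, σ j ≠ j) →
      ∑ j : Fin (2*q+2), D (f j) (f (σ j)) ≤ ∑ j : Fin (2*q+2), D (f j) (f (crossShift q j))


/-- The principal submatrix of `D` indexed by the set `S`, with the elements of `S`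
listed in increasing order. -/
noncomputable def subMat {n : ℕ} (D : Fin n → Fin n → ℝ) (S : Finset (Fin n)) :
    Fin S.card → Fin S.card → ℝ :=
  fun i j => D (S.orderIsoOfFin rfl i).1 (S.orderIsoOfFin rfl j).1

/-- The identity permutation is a master tour for the `q`-stripe TSP on `D`:
for every subset `S` of the cities with `|S| ≥ 2q+1`, listing the elements of `S`
in increasing order minimizes the `q`-stripe objective (computed with respect to
the principal submatrix of `D` indexed by `S`) over all permutations of `S`. -/
noncomputable def IdIsMasterTour (q : ℕ) {n : ℕ} (D : Fin n → Fin n → ℝ) : Prop :=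
  ∀ S : Finset (Fin n), 2*q+1 ≤ S.card →
    ∀ π : Equiv.Perm (Fin S.card),
      stripeObj q (subMat D S) (Equiv.refl (Fin S.card)) ≤ stripeObj q (subMat D S) π

/-!
In a closed tour on `m` cities the layers at distances `p` and `m - p` agree, so twice the stripe
objective plus the uncounted layers `q < p < m - q` does not depend on the order of the cities.
For `m = 2q + 2` the only uncounted layer is twice the crossing matching; hence minimal stripe
cost is maximal crossing matching. For `m = 2q + 1` there is none, and all tours cost the same.

For larger `m` one inducts by removing the largest city `x`, rotated to the last position. Putting
`x` back costs its distances to the `q` cities on either side minus the `q` pairs that it drives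
apart. Among all choices of these `2q` cities, the `q` smallest and the `q` largest in order are
cheapest: for a further city `z`, the crossing matching on the `2q` cities, `z` and `x` pairs `x`
with the median `y` of the others, so exchanging `z` for `y` does not raise the cost.
-/

open Finset Function

section Rearrangements

theorem exists_perm_comp_eq {ι α : Type*} [Finite ι] {f g : ι → α} (hg : Injective g)
    (hgf : ∀ i, g i ∈ Set.range f) : ∃ ρ : Equiv.Perm ι, f ∘ ρ = g := by
  choose ρ hρ using hgf
  have hρ_inj : Injective ρ := fun i j h => hg (by rw [← hρ i, ← hρ j, h])
  exact ⟨Equiv.ofBijective ρ (Finite.injective_iff_bijective.1 hρ_inj), funext hρ⟩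

theorem strictMono_eq_of_forall_mem_range {ι α : Type*} [LinearOrder ι] [Finite ι] [Preorder α]
    {f g : ι → α} (hf : StrictMono f) (hg : StrictMono g) (hgf : ∀ i, g i ∈ Set.range f) :
    g = f := by
  obtain ⟨ρ, rfl⟩ := exists_perm_comp_eq hg.injective hgf
  exact (hg.range_inj hf).1 (ρ.surjective.range_comp f)

theorem isConj_of_involutive_of_forall_ne {ι : Type*} [Finite ι] {σ τ : Equiv.Perm ι}
    (hσ : Involutive σ) (hσ' : ∀ i, σ i ≠ i) (hτ : Involutive τ) (hτ' : ∀ i, τ i ≠ i) :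
    IsConj σ τ := by
  classical
  have := Fintype.ofFinite ι
  have cycleType_eq {κ : Equiv.Perm ι} (hκ : Involutive κ) (hκ' : ∀ i, κ i ≠ i) :
      κ.cycleType = Multiset.replicate (Fintype.card ι / 2) 2 := by
    have htwo : κ.cycleType = Multiset.replicate κ.cycleType.card 2 :=
      Equiv.Perm.cycleType_of_pow_prime_eq_one (Equiv.ext fun i => by simp [pow_two, hκ i])
    have hsupp : κ.support = univ := by ext i; simp [hκ' i]
    have hsum := κ.sum_cycleType
    rw [hsupp, htwo, Multiset.sum_replicate, smul_eq_mul, card_univ] at hsum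
    rw [htwo, ← hsum, Nat.mul_div_cancel _ two_pos]
  rw [Equiv.Perm.isConj_iff_cycleType_eq, cycleType_eq hσ hσ', cycleType_eq hτ hτ']

end Rearrangements

section CyclicShift

variable {m : ℕ}

theorem finShift_eq_add [NeZero m] (i : Fin m) (p : ℕ) : finShift i p = i + Fin.ofNat m p := by
  ext
  simp [finShift, Fin.val_add]

theorem finShift_val (i p : Fin m) : finShift i p = i + p := by
  ext
  simp [finShift, Fin.val_add]

theorem finShift_finShift (i : Fin m) (p p' : ℕ) :
    finShift (finShift i p) p' = finShift i (p + p') := by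
  ext
  simp [finShift, add_assoc]

theorem finShift_zero (i : Fin m) : finShift i 0 = i := by
  ext
  simp [finShift, Nat.mod_eq_of_lt]

theorem finShift_self (i : Fin m) : finShift i m = i := by
  ext
  simp [finShift, Nat.mod_eq_of_lt]

theorem finShift_injective (p : ℕ) : Injective fun i : Fin m => finShift i p := by
  rcases m.eq_zero_or_pos with rfl | hm
  · exact injective_of_subsingleton _
  · have : NeZero m := ⟨hm.ne'⟩
    simpa only [finShift_eq_add] using add_left_injective (Fin.ofNat m p)

theorem sum_comp_finShift {M : Type*} [AddCommMonoid M] (φ : Fin m → M) (p : ℕ) :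
    ∑ i, φ (finShift i p) = ∑ i, φ i :=
  (Finite.injective_iff_bijective.1 (finShift_injective p)).sum_comp φ

theorem exists_finShift_eq (i j : Fin m) : ∃ p, finShift i p = j := by
  have : NeZero m := ⟨i.pos.ne'⟩
  exact ⟨(j - i : Fin m), by rw [finShift_val, add_sub_cancel]⟩

end CyclicShift

section Tours

variable {α : Type*} (D : α → α → ℝ) {m : ℕ}

/-- The total weight of the ordered pairs of cities `p` steps apart in the closed tour `w`. -/
def cyclicLayer (w : Fin m → α) (p : ℕ) : ℝ :=
  ∑ i, D (w i) (w (finShift i p))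

/-- The `q`-stripe objective of the closed tour `w`, whose cities may be of any type. -/
def tourCost (q : ℕ) (w : Fin m → α) : ℝ :=
  ∑ p ∈ Icc 1 q, cyclicLayer D w p

variable {D}

theorem cyclicLayer_zero (w : Fin m → α) : cyclicLayer D w 0 = ∑ i, D (w i) (w i) := by
  simp only [cyclicLayer, finShift_zero]

theorem cyclicLayer_sub (hD : ∀ x y, D x y = D y x) (w : Fin m → α) {p : ℕ} (hp : p ≤ m) :
    cyclicLayer D w (m - p) = cyclicLayer D w p := by
  unfold cyclicLayer
  rw [← sum_comp_finShift (fun i => D (w i) (w (finShift i (m - p)))) p]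
  refine sum_congr rfl fun i _ => ?_
  rw [finShift_finShift, Nat.add_sub_cancel' hp, finShift_self, hD]

theorem sum_cyclicLayer (w : Fin m → α) :
    ∑ p ∈ range m, cyclicLayer D w p = ∑ i, ∑ j, D (w i) (w j) := by
  unfold cyclicLayer
  rw [sum_comm]
  refine sum_congr rfl fun i _ => ?_
  have : NeZero m := ⟨i.pos.ne'⟩
  rw [← Fin.sum_univ_eq_sum_range (fun p => D (w i) (w (finShift i p)))]
  simp only [finShift_val]
  exact Equiv.sum_comp (Equiv.addLeft i) fun j => D (w i) (w j)

theorem tourCost_eq_sum_range (q : ℕ) (w : Fin m → α) :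
    tourCost D q w = ∑ p ∈ range q, cyclicLayer D w (p + 1) := by
  rw [tourCost, ← Ico_add_one_right_eq_Icc, sum_Ico_eq_sum_range, Nat.add_sub_cancel]
  simp only [add_comm 1]

theorem tourCost_comp_finShift (q : ℕ) (w : Fin m → α) (c : ℕ) :
    tourCost D q (fun i => w (finShift i c)) = tourCost D q w := by
  refine sum_congr rfl fun p _ => ?_
  simp only [cyclicLayer, finShift_finShift, add_comm p c]
  simp only [← finShift_finShift]
  exact sum_comp_finShift (fun i => D (w i) (w (finShift i p))) c

-- The distances `p` and `m - p` give the same layer, so all layers except those with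
-- `q < p < m - q` and the diagonal are counted twice by the stripe objective.
theorem two_mul_tourCost (hD : ∀ x y, D x y = D y x) {q : ℕ} (hq : 2 * q < m) (w : Fin m → α) :
    2 * tourCost D q w + ∑ p ∈ Ico (q + 1) (m - q), cyclicLayer D w p
      = ∑ i, ∑ j, D (w i) (w j) - ∑ i, D (w i) (w i) := by
  have hreflect : ∑ p ∈ Ico (m - q) m, cyclicLayer D w p = tourCost D q w := by
    have h := sum_Ico_reflect (fun p => cyclicLayer D w p) 1 (show q + 1 ≤ m + 1 by omega)
    rw [Nat.add_sub_cancel, show m + 1 - (q + 1) = m - q by omega] at h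
    rw [← h]
    refine sum_congr rfl fun p hp => cyclicLayer_sub hD w ?_
    have := mem_Ico.1 hp
    omega
  rw [← sum_cyclicLayer, ← cyclicLayer_zero, range_eq_Ico,
    sum_eq_sum_Ico_succ_bot (show 0 < m by omega),
    ← sum_Ico_consecutive _ (show 0 + 1 ≤ q + 1 by omega) (show q + 1 ≤ m by omega),
    ← sum_Ico_consecutive _ (show q + 1 ≤ m - q by omega) (show m - q ≤ m by omega), hreflect]
  rw [tourCost, ← Ico_add_one_right_eq_Icc]
  ring

theorem two_mul_tourCost_comp_perm (hD : ∀ x y, D x y = D y x) {q : ℕ} (hq : 2 * q < m)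
    (w : Fin m → α) (ρ : Equiv.Perm (Fin m)) :
    2 * tourCost D q (w ∘ ρ) + ∑ p ∈ Ico (q + 1) (m - q), cyclicLayer D (w ∘ ρ) p
      = 2 * tourCost D q w + ∑ p ∈ Ico (q + 1) (m - q), cyclicLayer D w p := by
  rw [two_mul_tourCost hD hq, two_mul_tourCost hD hq, ← Equiv.sum_comp ρ fun i => D (w i) (w i),
    ← Equiv.sum_comp ρ fun i => ∑ j, D (w i) (w j)]
  congr 1
  exact sum_congr rfl fun i _ => Equiv.sum_comp ρ fun j => D (w (ρ i)) (w j)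

end Tours

section Pairings

variable {α : Type*} {r : ℕ}

/-- The weight of the matching that pairs the `j`-th entry of the first half of `e` with the
`j`-th entry of its second half; for increasing `e` this is the fully crossing matching, and a
general perfect matching is obtained by permuting the entries. -/
def pairWeight (D : α → α → ℝ) (e : Fin (r + r) → α) : ℝ :=
  ∑ j, D (e (Fin.castAdd r j)) (e (Fin.natAdd r j))

/-- The fully crossing matching has maximum weight among the perfect matchings of any `2r`
points, a matching being encoded by an ordering of the points as in `pairWeight`. -/
def CrossingMaximal [Preorder α] (r : ℕ) (D : α → α → ℝ) : Prop :=
  ∀ ⦃f : Fin (r + r) → α⦄, StrictMono f → ∀ ρ : Equiv.Perm (Fin (r + r)),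
    pairWeight D (f ∘ ρ) ≤ pairWeight D f

variable {D : α → α → ℝ}

theorem cyclicLayer_half (hD : ∀ x y, D x y = D y x) (e : Fin (r + r) → α) :
    cyclicLayer D e r = 2 * pairWeight D e := by
  have hleft (j : Fin r) : finShift (Fin.castAdd r j) r = Fin.natAdd r j := by
    ext
    simp [finShift, add_comm, Nat.mod_eq_of_lt]
  have hright (j : Fin r) : finShift (Fin.natAdd r j) r = Fin.castAdd r j := by
    rw [← hleft, finShift_finShift, finShift_self]
  simp only [cyclicLayer, pairWeight, Fin.sum_univ_add, hleft, hright, two_mul]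
  simp only [hD (e (Fin.natAdd r _))]

theorem crossShift_involutive (q : ℕ) : Involutive (crossShift q) := fun j => by
  change finShift (finShift j (q + 1)) (q + 1) = j
  rw [finShift_finShift, show q + 1 + (q + 1) = 2 * q + 2 by ring, finShift_self]

theorem crossShift_ne (q : ℕ) (j : Fin (2 * q + 2)) : crossShift q j ≠ j := fun h => by
  have hval : (j.val + (q + 1)) % (2 * q + 2) = j := congrArg Fin.val h
  have hmod : (j.val + (q + 1)) ≡ j + 0 [MOD 2 * q + 2] := by
    simp [Nat.ModEq, hval, Nat.mod_eq_of_lt]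
  have := (Nat.ModEq.add_left_cancel' _ hmod).eq_of_lt_of_lt (by omega) (by omega)
  omega

-- The size `m` is a variable because `2 * q + 2` and the size `q + 1 + (q + 1)` used for
-- `pairWeight` are not definitionally equal.
theorem qKalmanson_iff_cyclicLayer_le {q n m : ℕ} {D : Fin n → Fin n → ℝ} (hm : m = 2 * q + 2) :
    qKalmanson q D ↔ ∀ f : Fin m → Fin n, StrictMono f → ∀ ρ : Equiv.Perm (Fin m),
      cyclicLayer D (f ∘ ρ) (q + 1) ≤ cyclicLayer D f (q + 1) := by
  subst hm
  have sum_conj (f : Fin (2 * q + 2) → Fin n) (ρ : Equiv.Perm (Fin (2 * q + 2))) :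
      ∑ j, D (f j) (f ((ρ * (crossShift_involutive q).toPerm * ρ⁻¹) j))
        = cyclicLayer D (f ∘ ρ) (q + 1) := by
    rw [← Equiv.sum_comp ρ]
    simp [cyclicLayer, crossShift, finShift]
  constructor
  · intro h f hf ρ
    rw [← sum_conj]
    refine h f hf _ (fun j => ?_) fun j hj => crossShift_ne q (ρ⁻¹ j) (ρ.injective ?_)
    · simp [(crossShift_involutive q) _]
    · simpa using hj
  · intro h f hf σ hσ hσ_ne
    obtain ⟨ρ, rfl⟩ := isConj_iff.1
      (isConj_of_involutive_of_forall_ne (σ := (crossShift_involutive q).toPerm)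
        (crossShift_involutive q) (crossShift_ne q) hσ hσ_ne)
    rw [sum_conj]
    exact h f hf ρ

theorem qKalmanson_iff_crossingMaximal {q n : ℕ} {D : Fin n → Fin n → ℝ}
    (hD : ∀ i j, D i j = D j i) : qKalmanson q D ↔ CrossingMaximal (q + 1) D := by
  rw [qKalmanson_iff_cyclicLayer_le (show q + 1 + (q + 1) = 2 * q + 2 by ring)]
  simp only [cyclicLayer_half hD, mul_le_mul_iff_right₀ (two_pos : (0 : ℝ) < 2), CrossingMaximal]

/-- The pairs `(e j, e (r + j))` followed by the additional pair `(z, x)`. -/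
def snocPair (e : Fin (r + r) → α) (z x : α) : Fin (r + 1 + (r + 1)) → α :=
  Fin.append (Fin.snoc (fun j => e (Fin.castAdd r j)) z)
    (Fin.snoc (fun j => e (Fin.natAdd r j)) x)

theorem pairWeight_snocPair (e : Fin (r + r) → α) (z x : α) :
    pairWeight D (snocPair e z x) = pairWeight D e + D z x := by
  simp only [pairWeight, snocPair, Fin.append_left, Fin.append_right, Fin.sum_univ_castSucc,
    Fin.snoc_castSucc, Fin.snoc_last]

theorem sum_snocPair (φ : α → ℝ) (e : Fin (r + r) → α) (z x : α) :
    ∑ i, φ (snocPair e z x i) = ∑ i, φ (e i) + φ z + φ x := by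
  simp only [snocPair, Fin.sum_univ_add, Fin.append_left, Fin.append_right,
    Fin.sum_univ_castSucc, Fin.snoc_castSucc, Fin.snoc_last]
  ring

theorem range_snocPair (e : Fin (r + r) → α) (z x : α) :
    Set.range (snocPair e z x) = insert x (insert z (Set.range e)) := by
  have range_append {k l : ℕ} (u : Fin k → α) (v : Fin l → α) :
      Set.range (Fin.append u v) = Set.range u ∪ Set.range v := by
    rw [← Set.Sum.elim_range, ← Fin.append_comp_sumElim]
    exact (finSumFinEquiv.surjective.range_comp _).symm
  rw [← Fin.append_castAdd_natAdd (f := e), snocPair, range_append, range_append]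
  simp only [Fin.append_left, Fin.append_right, Fin.range_snoc]
  rw [Set.insert_union, Set.union_insert, Set.insert_comm]

theorem snocPair_injective_iff {e : Fin (r + r) → α} {z x : α} :
    Injective (snocPair e z x) ↔ Injective e ∧ z ∉ insert x (Set.range e) ∧ x ∉ Set.range e := by
  rw [← Fin.append_castAdd_natAdd (f := e)]
  simp only [snocPair, Fin.append_injective_iff, Fin.snoc_injective_iff, Fin.forall_fin_succ',
    Fin.snoc_castSucc, Fin.snoc_last, Set.mem_insert_iff, Set.mem_range, not_or, not_exists,
    Fin.forall_fin_add, Fin.append_left, Fin.append_right]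
  grind

theorem exists_snocPair_eq_of_strictMono [Preorder α] {F : Fin (r + 1 + (r + 1)) → α}
    (hF : StrictMono F) : ∃ e y x, snocPair e y x = F ∧ StrictMono e ∧
      (∀ j, e (Fin.castAdd r j) < y) ∧ (∀ j, y < e (Fin.natAdd r j)) ∧ ∀ i, F i ≤ x := by
  refine ⟨Fin.append (fun j => F (Fin.castAdd _ j.castSucc)) fun j => F (Fin.natAdd _ j.castSucc),
    F (Fin.castAdd _ (Fin.last r)), F (Fin.natAdd _ (Fin.last r)), funext fun i => ?_,
    fun i j hij => ?_, fun j => ?_, fun j => ?_, fun i => hF.monotone (Fin.le_last i)⟩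
  · induction i using Fin.addCases with | _ i <;> induction i using Fin.lastCases <;>
      simp only [snocPair, Fin.append_left, Fin.append_right, Fin.snoc_castSucc, Fin.snoc_last]
  · induction i using Fin.addCases <;> induction j using Fin.addCases <;>
      simp only [Fin.append_left, Fin.append_right] <;> apply hF <;>
      simp only [Fin.lt_def, Fin.val_castAdd, Fin.val_natAdd, Fin.val_castSucc] at hij ⊢ <;>
      omega
  · rw [Fin.append_left]
    exact hF j.castSucc_lt_last
  · rw [Fin.append_right]
    refine hF ?_
    simp only [Fin.lt_def, Fin.val_castAdd, Fin.val_natAdd, Fin.val_last]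
    omega

end Pairings

section Insertion

variable {α : Type*} {q : ℕ}

/-- The cost of inserting `x` between the two members of each of the `q` pairs
`(e j, e (q + j))`, for symmetric weights `D`. -/
def insertionCost (D : α → α → ℝ) (e : Fin (q + q) → α) (x : α) : ℝ :=
  ∑ i, D (e i) x - pairWeight D e

/-- The indices of the first `q` and the last `q` among `k` consecutive positions: in a closed
tour, the `q` positions after and the `q` positions before an additional last one. -/
def flank {k : ℕ} (hq : q ≤ k) : Fin (q + q) → Fin k :=
  Fin.append (fun j => ⟨j, by omega⟩) fun j => ⟨k - q + j, by omega⟩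

theorem flank_strictMono {k : ℕ} (hq : q ≤ k) (hk : 2 * q ≤ k) : StrictMono (flank hq) := by
  intro i j hij
  induction i using Fin.addCases <;> induction j using Fin.addCases <;>
    simp only [flank, Fin.append_left, Fin.append_right, Fin.lt_def, Fin.val_castAdd,
      Fin.val_natAdd] at hij ⊢ <;>
    omega

theorem flank_lt_or_le {k : ℕ} (hq : q ≤ k) (i : Fin (q + q)) :
    (flank hq i : ℕ) < q ∨ k - q ≤ (flank hq i : ℕ) := by
  induction i using Fin.addCases <;>
    simp only [flank, Fin.append_left, Fin.append_right] <;>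
    omega

variable {D : α → α → ℝ}

theorem cyclicLayer_eq_sum_range (W : ℕ → α) {m p : ℕ} (hp : p ≤ m) :
    cyclicLayer D (fun i : Fin m => W i) p
      = ∑ i ∈ range (m - p), D (W i) (W (i + p)) + ∑ j ∈ range p, D (W (m - p + j)) (W j) := by
  have hrange : cyclicLayer D (fun i : Fin m => W i) p
      = ∑ i ∈ range (m - p + p), D (W i) (W ((i + p) % m)) := by
    rw [Nat.sub_add_cancel hp]
    exact Fin.sum_univ_eq_sum_range (fun i => D (W i) (W ((i + p) % m))) m
  rw [hrange, sum_range_add]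
  congr 1 <;> refine sum_congr rfl fun i hi => ?_ <;> have := mem_range.1 hi
  · rw [Nat.mod_eq_of_lt (by omega)]
  · rw [show m - p + i + p = i + m by omega, Nat.add_mod_right, Nat.mod_eq_of_lt (by omega)]

-- The pairs around the end of the tour are grouped so that they telescope when summed over `p`.
theorem cyclicLayer_succ (W : ℕ → α) {k p : ℕ} (hp : p < k) :
    cyclicLayer D (fun i : Fin (k + 1) => W i) (p + 1)
      = cyclicLayer D (fun i : Fin k => W i) (p + 1) + D (W (k - 1 - p)) (W k) + D (W k) (W p)
        + (∑ j ∈ range p, D (W (k - p + j)) (W j)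
          - ∑ j ∈ range (p + 1), D (W (k - (p + 1) + j)) (W j)) := by
  rw [cyclicLayer_eq_sum_range W (show p + 1 ≤ k + 1 by omega),
    cyclicLayer_eq_sum_range W (show p + 1 ≤ k by omega),
    show k + 1 - (p + 1) = k - (p + 1) + 1 by omega, sum_range_succ,
    show k - (p + 1) + (p + 1) = k by omega, show k - (p + 1) + 1 = k - p by omega,
    sum_range_succ (fun j => D (W (k - p + j)) (W j)), show k - p + p = k by omega,
    show k - (p + 1) = k - 1 - p by omega]
  ring

theorem insertionCost_comp_flank (hD : ∀ x y, D x y = D y x) (W : ℕ → α) {k : ℕ}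
    (hq : q ≤ k) (x : α) :
    insertionCost D (fun i => W (flank hq i)) x
      = ∑ p ∈ range q, D (W (k - 1 - p)) x + ∑ p ∈ range q, D x (W p)
        - ∑ j ∈ range q, D (W (k - q + j)) (W j) := by
  have hlast : ∑ j ∈ range q, D (W (k - q + j)) x = ∑ p ∈ range q, D (W (k - 1 - p)) x := by
    rw [← sum_range_reflect]
    refine sum_congr rfl fun j hj => ?_
    have := mem_range.1 hj
    rw [show k - q + (q - 1 - j) = k - 1 - j by omega]
  simp only [insertionCost, pairWeight, flank, Fin.sum_univ_add, Fin.append_left, Fin.append_right,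
    Fin.sum_univ_eq_sum_range (fun j => D (W j) x),
    Fin.sum_univ_eq_sum_range (fun j => D (W (k - q + j)) x),
    Fin.sum_univ_eq_sum_range (fun j => D (W j) (W (k - q + j))), hlast]
  simp only [hD x, hD (W (k - q + _))]
  ring

theorem tourCost_eq_add_insertionCost (hD : ∀ x y, D x y = D y x) {k : ℕ} (hq : q ≤ k)
    (w : Fin (k + 1) → α) :
    tourCost D q w = tourCost D q (w ∘ Fin.castSucc)
      + insertionCost D (w ∘ Fin.castSucc ∘ flank hq) (w (Fin.last k)) := by
  obtain ⟨W, rfl⟩ : ∃ W : ℕ → α, (fun i : Fin (k + 1) => W i) = w :=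
    ⟨fun i => w (Fin.ofNat (k + 1) i), by simp⟩
  have hins := insertionCost_comp_flank hD W hq (W k)
  have htel := sum_range_sub' (fun p => ∑ j ∈ range p, D (W (k - p + j)) (W j)) q
  simp only [range_zero, sum_empty, zero_sub] at htel
  change tourCost D q (fun i : Fin (k + 1) => W i)
    = tourCost D q (fun i : Fin k => W i) + insertionCost D (fun i => W (flank hq i)) (W k)
  rw [tourCost_eq_sum_range, tourCost_eq_sum_range, hins,
    sum_congr rfl fun p hp => cyclicLayer_succ W ((mem_range.1 hp).trans_le hq),
    sum_add_distrib, sum_add_distrib, sum_add_distrib, htel]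
  ring

theorem notMem_range_comp_flank [LinearOrder α] {k : ℕ} (hqk : q ≤ k) {f : Fin k → α}
    (hf : StrictMono f) {e : Fin (q + q) → α} {y : α} (he : Injective e)
    (hef : insert y (Set.range e) ⊆ Set.range f) (hleft : ∀ j, e (Fin.castAdd q j) < y)
    (hright : ∀ j, y < e (Fin.natAdd q j)) : y ∉ Set.range (f ∘ flank hqk) := by
  obtain ⟨r, rfl⟩ := hef (Set.mem_insert _ _)
  choose g hg using fun i => hef (Set.mem_insert_of_mem _ ⟨i, rfl⟩)
  obtain rfl : f ∘ g = e := funext hg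
  have hg_inj := he.of_comp
  have hbelow : q ≤ r := by
    simpa using card_le_card_of_injOn (s := univ) (t := Iio r) (fun j => g (Fin.castAdd q j))
      (fun j _ => by simpa using hf.lt_iff_lt.1 (hleft j))
      (hg_inj.comp (Fin.castAdd_injective q q)).injOn
  have habove : q ≤ k - 1 - r := by
    simpa using card_le_card_of_injOn (s := univ) (t := Ioi r) (fun j => g (Fin.natAdd q j))
      (fun j _ => by simpa using hf.lt_iff_lt.1 (hright j))
      (hg_inj.comp (Fin.natAdd_injective q q)).injOn
  rintro ⟨i, hi⟩
  have := hf.injective hi ▸ flank_lt_or_le hqk i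
  have := r.isLt
  omega

section Exchange

variable [LinearOrder α] {x : α}

theorem exists_snocPair_comp_perm_eq {e : Fin (q + q) → α} (he : Injective e) {z : α}
    (hz : z ∉ Set.range e) (hlt : ∀ u ∈ insert z (Set.range e), u < x) :
    ∃ (ρ : Equiv.Perm (Fin (q + 1 + (q + 1)))) (e' : Fin (q + q) → α) (y : α),
      snocPair e z x ∘ ρ = snocPair e' y x ∧ StrictMono (snocPair e' y x) ∧ StrictMono e' ∧
      (∀ j, e' (Fin.castAdd q j) < y) ∧ (∀ j, y < e' (Fin.natAdd q j)) ∧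
      insert y (Set.range e') = insert z (Set.range e) := by
  have hx : x ∉ insert z (Set.range e) := fun h => (hlt x h).false
  have hinj : Injective (snocPair e z x) := snocPair_injective_iff.2
    ⟨he, by simp [hz, (hlt z (.inl rfl)).ne], fun h => hx (.inr h)⟩
  set ρ := Tuple.sort (snocPair e z x)
  have hF : StrictMono (snocPair e z x ∘ ρ) :=
    (Tuple.monotone_sort _).strictMono_of_injective (hinj.comp ρ.injective)
  obtain ⟨e', y, x', hF_eq, he', hlt_y, hy_lt, hmax⟩ := exists_snocPair_eq_of_strictMono hF
  have hrange : insert x' (insert y (Set.range e')) = insert x (insert z (Set.range e)) := by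
    rw [← range_snocPair, ← range_snocPair, hF_eq, ρ.surjective.range_comp]
  rw [← hF_eq] at hF hmax
  obtain rfl : x' = x := by
    have hx'_le : x' ≤ x := by
      rcases hrange.subset (Set.mem_insert _ _) with h | h
      exacts [h.le, (hlt _ h).le]
    obtain ⟨i, hi⟩ : x ∈ Set.range (snocPair e' y x') := by
      rw [range_snocPair, hrange]
      exact Set.mem_insert _ _
    exact hx'_le.antisymm (hi ▸ hmax i)
  have hx' : x' ∉ insert y (Set.range e') := by
    have hF_inj := snocPair_injective_iff.1 hF.injective
    rintro (h | h)
    exacts [hF_inj.2.1 (.inl h.symm), hF_inj.2.2 h]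
  refine ⟨ρ, e', y, hF_eq.symm, hF, he', hlt_y, hy_lt, ?_⟩
  rw [← Set.insert_sdiff_self_of_notMem hx', hrange, Set.insert_sdiff_self_of_notMem hx]

-- The crossing matching on the range of `e` together with `z` and `x` consists of a pairing `e'`
-- and a pair `(y, x)`, so its optimality bounds the cost of inserting `x` into `e'`.
theorem CrossingMaximal.exists_insertionCost_le (hD : CrossingMaximal (q + 1) D)
    {e : Fin (q + q) → α} (he : Injective e) {z : α} (hz : z ∉ Set.range e)
    (hlt : ∀ u ∈ insert z (Set.range e), u < x) :
    ∃ e' y, StrictMono e' ∧ (∀ j, e' (Fin.castAdd q j) < y) ∧ (∀ j, y < e' (Fin.natAdd q j)) ∧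
      insert y (Set.range e') = insert z (Set.range e) ∧
      insertionCost D e' x ≤ insertionCost D e x := by
  obtain ⟨ρ, e', y, hρ, hF, he', hlt_y, hy_lt, hrange⟩ := exists_snocPair_comp_perm_eq he hz hlt
  refine ⟨e', y, he', hlt_y, hy_lt, hrange, ?_⟩
  have hsum : ∑ i, D (e' i) x + D y x + D x x = ∑ i, D (e i) x + D z x + D x x := by
    rw [← sum_snocPair (D · x), ← sum_snocPair (D · x), ← hρ]
    exact Equiv.sum_comp ρ fun i => D (snocPair e z x i) x
  have hweight : pairWeight D e + D z x ≤ pairWeight D e' + D y x := by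
    rw [← pairWeight_snocPair, ← pairWeight_snocPair, ← (Equiv.comp_symm_eq ρ _ _).2 hρ.symm]
    exact hD hF ρ.symm
  simp only [insertionCost]
  linarith

theorem CrossingMaximal.exists_insertionCost_le_of_subset_range (hD : CrossingMaximal (q + 1) D)
    {k : ℕ} (hqk : q ≤ k) {f : Fin k → α} (hf : StrictMono f) (hfx : ∀ i, f i < x)
    {e : Fin (q + q) → α} (he : Injective e) {z : α} (hz : z ∉ Set.range e)
    (hzf : insert z (Set.range e) ⊆ Set.range f) :
    ∃ e' : Fin (q + q) → α, StrictMono e' ∧ Set.range e' ⊆ Set.range f ∧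
      Set.range (f ∘ flank hqk) ∩ insert z (Set.range e) ⊆ Set.range e' ∧
      insertionCost D e' x ≤ insertionCost D e x := by
  obtain ⟨e', y, he', hlt_y, hy_lt, hrange, hle⟩ := hD.exists_insertionCost_le he hz
    fun u hu => (Set.forall_mem_range (p := (· < x))).2 hfx u (hzf hu)
  have hyf : insert y (Set.range e') ⊆ Set.range f := hrange.trans_subset hzf
  have hy := notMem_range_comp_flank hqk hf he'.injective hyf hlt_y hy_lt
  refine ⟨e', he', (Set.subset_insert _ _).trans hyf, fun u ⟨hu, hue⟩ => ?_, hle⟩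
  exact (hrange ▸ hue).resolve_left fun h => hy (h ▸ hu)

-- Exchanging against some `z` in the flanks brings `e` closer to `f ∘ flank`; once `e` covers the
-- flanks, an exchange against any other `z` also puts the pairs in the right order.
theorem CrossingMaximal.insertionCost_flank_le (hD : CrossingMaximal (q + 1) D) {k : ℕ}
    (hk : 2 * q < k) (hqk : q ≤ k) {f : Fin k → α} (hf : StrictMono f) (hfx : ∀ i, f i < x)
    {e : Fin (q + q) → α} (he : Injective e) (hef : Set.range e ⊆ Set.range f) :
    insertionCost D (f ∘ flank hqk) x ≤ insertionCost D e x := by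
  induction hN : (Set.range (f ∘ flank hqk) \ Set.range e).ncard
    using Nat.strong_induction_on generalizing e with
  | _ N ih =>
  by_cases hcover : Set.range (f ∘ flank hqk) ⊆ Set.range e
  · have hcard : (Set.range e).ncard < (Set.range f).ncard := by
      rw [Set.ncard_range_of_injective he, Set.ncard_range_of_injective hf.injective,
        Nat.card_fin, Nat.card_fin]
      omega
    obtain ⟨z, hzf, hze⟩ := Set.exists_mem_notMem_of_ncard_lt_ncard hcard
    obtain ⟨e', he', -, hkeep, hle⟩ := hD.exists_insertionCost_le_of_subset_range hqk hf hfx he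
      hze (Set.insert_subset hzf hef)
    have heq : f ∘ flank hqk = e' := strictMono_eq_of_forall_mem_range he'
      (hf.comp (flank_strictMono hqk hk.le)) fun i => hkeep ⟨⟨i, rfl⟩, .inr (hcover ⟨i, rfl⟩)⟩
    exact heq ▸ hle
  · obtain ⟨z, hz, hze⟩ := Set.not_subset.1 hcover
    obtain ⟨e', he', hef', hkeep, hle⟩ := hD.exists_insertionCost_le_of_subset_range hqk hf hfx he
      hze (Set.insert_subset (Set.range_comp_subset_range _ _ hz) hef)
    refine le_trans (ih _ ?_ he'.injective hef' rfl) hle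
    rw [← hN]
    refine Set.ncard_lt_ncard (Set.ssubset_iff_exists.2 ⟨?_, z, ⟨hz, hze⟩, ?_⟩)
    · exact fun u hu => ⟨hu.1, fun hue => hu.2 (hkeep ⟨hu.1, .inr hue⟩)⟩
    · exact fun h => h.2 (hkeep ⟨hz, .inl rfl⟩)

end Exchange

end Insertion

section MasterTour

variable {α : Type*} {D : α → α → ℝ} {q : ℕ}

theorem CrossingMaximal.tourCost_le [LinearOrder α] (hD : ∀ x y, D x y = D y x)
    (hcross : CrossingMaximal (q + 1) D) {m : ℕ} (hm : 2 * q + 1 ≤ m) {f w : Fin m → α}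
    (hf : StrictMono f) (hw : Injective w) (hwf : ∀ i, w i ∈ Set.range f) :
    tourCost D q f ≤ tourCost D q w := by
  induction m, hm using Nat.le_induction with
  | base =>
    obtain ⟨ρ, rfl⟩ := exists_perm_comp_eq hw hwf
    have h := two_mul_tourCost_comp_perm hD (Nat.lt_succ_self _) f ρ
    rw [Ico_eq_empty_of_le (by omega)] at h
    simp only [sum_empty, add_zero] at h
    linarith
  | succ k hk ih =>
    wlog hlast : w (Fin.last k) = f (Fin.last k) generalizing w
    · obtain ⟨ρ, rfl⟩ := exists_perm_comp_eq hw hwf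
      obtain ⟨c, hc⟩ := exists_finShift_eq (Fin.last k) (ρ.symm (Fin.last k))
      rw [← tourCost_comp_finShift q (f ∘ ρ) c]
      exact this (hw.comp (finShift_injective c)) (fun i => hwf _) (by simp [hc])
    have hqk : q ≤ k := by omega
    have hwf' (i : Fin k) : w i.castSucc ∈ Set.range (f ∘ Fin.castSucc) := by
      obtain ⟨j, hj⟩ := hwf i.castSucc
      rcases j.eq_castSucc_or_eq_last with ⟨j, rfl⟩ | rfl
      · exact ⟨j, hj⟩
      · exact absurd (hw (hlast.trans hj)) i.castSucc_lt_last.ne'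
    have hf' : StrictMono (f ∘ Fin.castSucc) := hf.comp Fin.strictMono_castSucc
    have hw' : Injective (w ∘ Fin.castSucc) := hw.comp (Fin.castSucc_injective k)
    rw [tourCost_eq_add_insertionCost hD hqk, tourCost_eq_add_insertionCost hD hqk w, hlast]
    refine add_le_add (ih hf' hw' hwf') ?_
    exact hcross.insertionCost_flank_le (by omega) hqk hf' (fun i => hf i.castSucc_lt_last)
      (hw'.comp (flank_strictMono hqk (by omega)).injective)
      (Set.range_subset_iff.2 fun i => hwf' _)

theorem crossingMaximal_of_tourCost_le [Preorder α] (hD : ∀ x y, D x y = D y x)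
    (hmin : ∀ f : Fin (q + 1 + (q + 1)) → α, StrictMono f → ∀ ρ : Equiv.Perm _,
      tourCost D q f ≤ tourCost D q (f ∘ ρ)) : CrossingMaximal (q + 1) D := by
  intro f hf ρ
  have h := two_mul_tourCost_comp_perm hD (show 2 * q < q + 1 + (q + 1) by omega) f ρ
  rw [show q + 1 + (q + 1) - q = q + 1 + 1 by omega, Nat.Ico_succ_singleton, sum_singleton,
    sum_singleton, cyclicLayer_half hD, cyclicLayer_half hD] at h
  linarith [hmin f hf ρ]

theorem idIsMasterTour_iff {n : ℕ} {D : Fin n → Fin n → ℝ} :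
    IdIsMasterTour q D ↔ ∀ m, 2 * q + 1 ≤ m → ∀ f : Fin m → Fin n, StrictMono f →
      ∀ ρ : Equiv.Perm (Fin m), tourCost D q f ≤ tourCost D q (f ∘ ρ) := by
  constructor
  · intro h m hm f hf ρ
    obtain ⟨S, hS⟩ : ∃ S : Finset (Fin n), S = univ.image f := ⟨_, rfl⟩
    obtain rfl : S.card = m := by
      rw [hS, card_image_of_injective _ hf.injective, card_fin]
    obtain rfl := orderEmbOfFin_unique (rfl : S.card = S.card) (fun i => by simp [hS]) hf
    exact h S hm ρ
  · exact fun h S hS ρ => h S.card hS (S.orderEmbOfFin rfl) (S.orderEmbOfFin rfl).strictMono ρ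

end MasterTour

/-- Theorem 4.1: for `q ≥ 1` and a symmetric `n×n` matrix `D` with `n ≥ 2q+2`, the
identity permutation is a master tour for the `q`-stripe TSP on `D` if and only if
`D` is a `q`-Kalmanson matrix. -/
theorem id_masterTour_iff_qKalmanson (q n : ℕ) (hq : 1 ≤ q) (hn : 2*q+2 ≤ n)
    (D : Fin n → Fin n → ℝ) (hsymm : ∀ i j, D i j = D j i) :
    IdIsMasterTour q D ↔ qKalmanson q D := by
  rw [qKalmanson_iff_crossingMaximal hsymm, idIsMasterTour_iff]
  constructor
  · exact fun h => crossingMaximal_of_tourCost_le hsymm (h _ (by omega))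
  · exact fun h m hm f hf ρ => h.tourCost_le hsymm hm hf (hf.injective.comp ρ.injective)
      fun i => Set.mem_range_self _
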